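/- arXiv:1706.03631 — 3 statements merged into one kernel-verified Lean document; each statement's English description precedes it below -/
import Mathlib

section
/- Let m ≥ 1 and let T : (Fin m → Fin 2) → ℂ be a symmetric tensor, i.e. T(i) = T(i∘σ) for every permutation σ of Fin m. Then T is a Hankel tensor and rank_S(T) = rank_V(T). -/
open scoped BigOperators
open MvPolynomial

noncomputable section

/-- An order-`m`, dimension-`n` complex tensor. -/
abbrev Tensor (m n : ℕ) := (Fin m → Fin n) → ℂ

/-- Tensors expressible as a sum of `r` rank-one tensors. -/
def cpSet (m n r : ℕ) : Set (Tensor m n) :=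
  {T | ∃ u : Fin r → Fin m → Fin n → ℂ, ∀ i, T i = ∑ k, ∏ j, u k j (i j)}

/-- Tensors expressible as a sum of `r` symmetric rank-one tensors. -/
def symSet (m n r : ℕ) : Set (Tensor m n) :=
  {T | ∃ v : Fin r → Fin n → ℂ, ∀ i, T i = ∑ k, ∏ j, v k (i j)}

/-- The Vandermonde vector `v(a,b) ∈ ℂ^n`, `v(a,b)_i = a^(n-1-i) * b^i`. -/
def vand (n : ℕ) (a b : ℂ) : Fin n → ℂ := fun i => a ^ (n - 1 - (i : ℕ)) * b ^ (i : ℕ)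

/-- Tensors expressible as a sum of `r` Vandermonde rank-one tensors. -/
def vandSet (m n r : ℕ) : Set (Tensor m n) :=
  {T | ∃ ab : Fin r → ℂ × ℂ, ∀ i, T i = ∑ k, ∏ j, vand n (ab k).1 (ab k).2 (i j)}

/-- The cp rank of a tensor. -/
def cpRank {m n : ℕ} (T : Tensor m n) : ℕ := sInf {r | T ∈ cpSet m n r}

/-- The symmetric rank of a tensor. -/
def symRank {m n : ℕ} (T : Tensor m n) : ℕ := sInf {r | T ∈ symSet m n r}

/-- The Vandermonde rank of a tensor. -/
def vandRank {m n : ℕ} (T : Tensor m n) : ℕ := sInf {r | T ∈ vandSet m n r}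

/-- The border rank of a tensor (closure in the product topology). -/
def brank {m n : ℕ} (T : Tensor m n) : ℕ := sInf {r | T ∈ closure (cpSet m n r)}

/-- The symmetric border rank of a tensor. -/
def bSymRank {m n : ℕ} (T : Tensor m n) : ℕ := sInf {r | T ∈ closure (symSet m n r)}

/-- The border Vandermonde rank of a tensor. -/
def bVandRank {m n : ℕ} (T : Tensor m n) : ℕ := sInf {r | T ∈ closure (vandSet m n r)}

/-- `T` is the Hankel tensor with parameter vector `h ∈ ℂ^{(n-1)m+1}`. -/
def IsHankel {m n : ℕ} (T : Tensor m n) (h : Fin ((n - 1) * m + 1) → ℂ) : Prop :=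
  ∀ i : Fin m → Fin n, T i = h ⟨∑ j, (i j : ℕ), by
    have h1 : ∑ j, (i j : ℕ) ≤ ∑ _j : Fin m, (n - 1) :=
      Finset.sum_le_sum fun j _ => Nat.le_pred_of_lt (i j).isLt
    simp only [Finset.sum_const, Finset.card_univ, Fintype.card_fin, smul_eq_mul] at h1
    exact Nat.lt_succ_of_le (h1.trans (le_of_eq (Nat.mul_comm m (n - 1))))⟩

/-- The `(d-r+1) × (r+1)` Hankel (catalecticant) matrix `C_{d-r,r}(h)` of `h ∈ ℂ^{d+1}`. -/
def hMat (d r : ℕ) (h : Fin (d + 1) → ℂ) : Matrix (Fin (d - r + 1)) (Fin (r + 1)) ℂ :=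
  Matrix.of fun i j => if hij : (i : ℕ) + (j : ℕ) < d + 1 then h ⟨(i : ℕ) + (j : ℕ), hij⟩ else 0

/-- The binary form `f(x,y) = f_0 x^r + f_1 x^(r-1) y + ⋯ + f_r y^r`. -/
def binForm (r : ℕ) (f : Fin (r + 1) → ℂ) : MvPolynomial (Fin 2) ℂ :=
  ∑ j : Fin (r + 1), C (f j) * X 0 ^ (r - (j : ℕ)) * X 1 ^ (j : ℕ)

/-- The binary form `h(x,y) = ∑_j binom(d,j) h_j x^j y^(d-j)` associated with `h ∈ ℂ^{d+1}`. -/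
def assocForm (d : ℕ) (h : Fin (d + 1) → ℂ) : MvPolynomial (Fin 2) ℂ :=
  ∑ j : Fin (d + 1), C ((d.choose (j : ℕ) : ℂ) * h j) * X 0 ^ (j : ℕ) * X 1 ^ (d - (j : ℕ))

/-- Parameter vectors of binary forms of Waring rank at most `r`. -/
def waringSet (d r : ℕ) : Set (Fin (d + 1) → ℂ) :=
  {h | ∃ ab : Fin r → ℂ × ℂ,
    assocForm d h = ∑ i, (C (ab i).1 * X 0 + C (ab i).2 * X 1) ^ d}

/-- The Waring rank of the binary form associated with `h`. -/
def waringRank (d : ℕ) (h : Fin (d + 1) → ℂ) : ℕ := sInf {r | h ∈ waringSet d r}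

/-- The border Waring rank of the binary form associated with `h`. -/
def bWaringRank (d : ℕ) (h : Fin (d + 1) → ℂ) : ℕ := sInf {r | h ∈ closure (waringSet d r)}

theorem sum_fin_two_eq_card {ι : Type*} [Fintype ι] (f : ι → Fin 2) :
    ∑ j, (f j : ℕ) = Finset.card {j | f j = 1} := by
  have val_eq_ite (x : Fin 2) : (x : ℕ) = if x = 1 then 1 else 0 := by decide +revert
  rw [Finset.card_filter]
  exact Finset.sum_congr rfl fun j _ => val_eq_ite (f j)

theorem exists_perm_comp_eq_of_sum_fin_two_eq {ι : Type*} [Fintype ι] {f g : ι → Fin 2}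
    (hsum : ∑ j, (f j : ℕ) = ∑ j, (g j : ℕ)) : ∃ σ : Equiv.Perm ι, g ∘ σ = f := by
  rw [sum_fin_two_eq_card, sum_fin_two_eq_card] at hsum
  obtain ⟨σ, map_ones⟩ := Equiv.Perm.exists_map_finset_eq _ _ hsum
  refine ⟨σ, funext fun j => ?_⟩
  have eq_one_iff : f j = 1 ↔ g (σ j) = 1 := by simpa using Finset.ext_iff.1 map_ones (σ j)
  rw [Function.comp_apply]
  omega

theorem exists_isHankel_iff_factorsThrough_sum {m n : ℕ} {T : Tensor m n} :
    (∃ h, IsHankel T h) ↔ T.FactorsThrough fun i => ∑ j, (i j : ℕ) := by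
  constructor
  · rintro ⟨h, hT⟩ i i' (hsum : ∑ j, (i j : ℕ) = ∑ j, (i' j : ℕ))
    simp only [hT i, hT i', hsum]
  · intro hT
    obtain ⟨e, rfl⟩ := (Function.factorsThrough_iff T).1 hT
    exact ⟨fun k => e k, fun _ => rfl⟩

theorem exists_isHankel_two_of_comp_perm_eq {m : ℕ} {T : Tensor m 2}
    (hsym : ∀ (σ : Equiv.Perm (Fin m)) (i : Fin m → Fin 2), T (i ∘ σ) = T i) :
    ∃ h, IsHankel T h := by
  refine exists_isHankel_iff_factorsThrough_sum.2 fun i i' hsum => ?_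
  obtain ⟨σ, rfl⟩ := exists_perm_comp_eq_of_sum_fin_two_eq hsum
  exact hsym σ i'

theorem vandSet_subset_symSet (m n r : ℕ) : vandSet m n r ⊆ symSet m n r := by
  rintro T ⟨ab, hT⟩
  exact ⟨fun k => vand n (ab k).1 (ab k).2, hT⟩

theorem vand_two (v : Fin 2 → ℂ) : vand 2 (v 0) (v 1) = v := by
  ext i
  fin_cases i <;> simp [vand]

theorem symSet_two_eq_vandSet (m r : ℕ) : symSet m 2 r = vandSet m 2 r := by
  refine Set.Subset.antisymm ?_ (vandSet_subset_symSet m 2 r)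
  rintro T ⟨v, hT⟩
  exact ⟨fun k => (v k 0, v k 1), by simpa only [vand_two] using hT⟩

theorem symRank_two_eq_vandRank {m : ℕ} (T : Tensor m 2) : symRank T = vandRank T := by
  simp only [symRank, vandRank, symSet_two_eq_vandSet]

/-- A symmetric tensor of dimension 2 is Hankel and its symmetric
rank equals its Vandermonde rank. -/
theorem stmt_1 (m : ℕ) (hm : 1 ≤ m) (T : Tensor m 2)
    (hsym : ∀ (σ : Equiv.Perm (Fin m)) (i : Fin m → Fin 2), T (i ∘ σ) = T i) :
    (∃ h : Fin ((2 - 1) * m + 1) → ℂ, IsHankel T h) ∧ symRank T = vandRank T := by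
  exact ⟨exists_isHankel_two_of_comp_perm_eq hsym, symRank_two_eq_vandRank T⟩
end
end

section
/- Let n ≥ 2, m ≥ 1, and let H be a Hankel tensor of order m and dimension n with parameter vector h ∈ ℂ^{d+1}, d = (n−1)m. Then rank_V(H) = rank_S(h), the Waring rank of the associated binary form h(x,y). -/
open scoped BigOperators
open MvPolynomial

noncomputable section

/-!
The tensor power `v(a,b)^{⊗m}` is itself Hankel, and its parameter vector is the Vandermonde vector
`v(a,b)` of length `d + 1`, where `d = (n - 1) * m`. By the binomial theorem this same vector is the
parameter vector of the binary form `(bx + ay)^d`. A Hankel tensor and a binary form both depend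
linearly on the parameter vector and determine it, so decompositions of either one are precisely
the decompositions of the parameter vector into Vandermonde vectors.
-/

section BinaryForms

variable {d : ℕ}

lemma assocForm_eq_sum_monomial (h : Fin (d + 1) → ℂ) :
    assocForm d h = ∑ j : Fin (d + 1),
      monomial (Finsupp.single 0 (j : ℕ) + Finsupp.single 1 (d - j)) (d.choose j * h j) := by
  simp only [assocForm, X_pow_eq_monomial, monomial_mul, C_mul_monomial, mul_one]

lemma coeff_assocForm (h : Fin (d + 1) → ℂ) (j : Fin (d + 1)) :
    coeff (Finsupp.single 0 (j : ℕ) + Finsupp.single 1 (d - j)) (assocForm d h) =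
      d.choose j * h j := by
  have exponent_injective : Function.Injective fun k : Fin (d + 1) ↦
      (Finsupp.single 0 (k : ℕ) + Finsupp.single 1 (d - k) : Fin 2 →₀ ℕ) := fun k l hkl ↦
    Fin.ext (by simpa using DFunLike.congr_fun hkl 0)
  simp only [assocForm_eq_sum_monomial, coeff_sum, coeff_monomial, exponent_injective.eq_iff,
    Finset.sum_ite_eq', Finset.mem_univ, if_true]

lemma assocForm_injective : Function.Injective (assocForm d) := by
  intro g h hgh
  ext j
  have choose_ne_zero : (d.choose j : ℂ) ≠ 0 :=
    Nat.cast_ne_zero.2 (Nat.choose_pos j.is_le).ne'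
  apply mul_left_cancel₀ choose_ne_zero
  rw [← coeff_assocForm, hgh, coeff_assocForm]

lemma assocForm_sum {ι : Type*} (s : Finset ι) (h : ι → Fin (d + 1) → ℂ) :
    assocForm d (∑ k ∈ s, h k) = ∑ k ∈ s, assocForm d (h k) := by
  simp only [assocForm_eq_sum_monomial, Finset.sum_apply, Finset.mul_sum, map_sum]
  exact Finset.sum_comm

lemma assocForm_vand (a b : ℂ) :
    assocForm d (vand (d + 1) a b) = (C b * X 0 + C a * X 1) ^ d := by
  rw [add_pow, ← Fin.sum_univ_eq_sum_range
    (fun j ↦ (C b * X 0) ^ j * (C a * X 1) ^ (d - j) * (d.choose j : MvPolynomial (Fin 2) ℂ))]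
  refine Finset.sum_congr rfl fun j _ ↦ ?_
  simp only [vand, add_tsub_cancel_right, map_mul, map_pow, map_natCast]
  ring

lemma mem_waringSet_iff {r : ℕ} {h : Fin (d + 1) → ℂ} :
    h ∈ waringSet d r ↔
      ∃ ab : Fin r → ℂ × ℂ, h = ∑ k, vand (d + 1) (ab k).1 (ab k).2 := by
  have swap_surjective : Function.Surjective fun (ab : Fin r → ℂ × ℂ) k ↦ (ab k).swap :=
    Prod.swap_surjective.comp_left
  simp only [← assocForm_injective.eq_iff, assocForm_sum, assocForm_vand]
  exact swap_surjective.exists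

end BinaryForms

/-- The tensor power `v^{⊗m}`, used to write the rank-one terms of `vandSet` as tensors. -/
def tensorPow (m : ℕ) {n : ℕ} (v : Fin n → ℂ) : Tensor m n := fun i ↦ ∏ j, v (i j)

section HankelTensors

variable {m n : ℕ}

lemma mem_vandSet_iff {r : ℕ} {T : Tensor m n} :
    T ∈ vandSet m n r ↔
      ∃ ab : Fin r → ℂ × ℂ, T = ∑ k, tensorPow m (vand n (ab k).1 (ab k).2) := by
  simp only [vandSet, Set.mem_ofPred_eq, funext_iff, Finset.sum_apply, tensorPow]

lemma isHankel_tensorPow_vand (a b : ℂ) :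
    IsHankel (tensorPow m (vand n a b)) (vand ((n - 1) * m + 1) a b) := by
  intro i
  have complementary_exponents : ∑ j, (n - 1 - (i j : ℕ)) = (n - 1) * m - ∑ j, (i j : ℕ) := by
    rw [Finset.sum_tsub_distrib _ fun j _ ↦ Nat.le_sub_one_of_lt (i j).isLt]
    simp [mul_comm]
  simp only [tensorPow, vand, Finset.prod_mul_distrib, Finset.prod_pow_eq_pow_sum,
    complementary_exponents, add_tsub_cancel_right]

lemma IsHankel.sum {ι : Type*} {s : Finset ι} {T : ι → Tensor m n}
    {h : ι → Fin ((n - 1) * m + 1) → ℂ} (hT : ∀ k ∈ s, IsHankel (T k) (h k)) :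
    IsHankel (∑ k ∈ s, T k) (∑ k ∈ s, h k) := by
  intro i
  simp only [Finset.sum_apply]
  exact Finset.sum_congr rfl fun k hk ↦ hT k hk i

lemma exists_sum_val_eq {ι : Type*} [Fintype ι] {N s : ℕ} (hs : s ≤ Fintype.card ι * N) :
    ∃ i : ι → Fin (N + 1), ∑ j, (i j : ℕ) = s := by
  obtain ⟨g, g_le, g_degree⟩ := Finsupp.exists_le_degree_eq
    (Finsupp.equivFunOnFinite.symm fun _ : ι ↦ N) s (by simpa [Finsupp.degree_eq_sum] using hs)
  exact ⟨fun j ↦ ⟨g j, Nat.lt_succ_of_le (g_le j)⟩, by simpa [Finsupp.degree_eq_sum] using g_degree⟩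

lemma IsHankel.eq_iff (hn : n ≠ 0) {T U : Tensor m n} {g h : Fin ((n - 1) * m + 1) → ℂ}
    (hT : IsHankel T g) (hU : IsHankel U h) : T = U ↔ g = h := by
  constructor
  · rintro rfl
    obtain ⟨N, rfl⟩ := Nat.exists_eq_succ_of_ne_zero hn
    ext s
    obtain ⟨i, hi⟩ : ∃ i : Fin m → Fin (N + 1), ∑ j, (i j : ℕ) = s :=
      exists_sum_val_eq (by simpa [mul_comm] using s.is_le)
    simpa only [hi] using (hT i).symm.trans (hU i)
  · rintro rfl
    ext i
    rw [hT i, hU i]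

lemma IsHankel.mem_vandSet_iff_mem_waringSet (hn : n ≠ 0) {H : Tensor m n}
    {h : Fin ((n - 1) * m + 1) → ℂ} (hH : IsHankel H h) {r : ℕ} :
    H ∈ vandSet m n r ↔ h ∈ waringSet ((n - 1) * m) r := by
  rw [mem_vandSet_iff, mem_waringSet_iff]
  exact exists_congr fun ab ↦
    hH.eq_iff hn (IsHankel.sum fun k _ ↦ isHankel_tensorPow_vand (ab k).1 (ab k).2)

end HankelTensors

/-- For a Hankel tensor `H` with parameter vector `h`,
`rank_V(H)` equals the Waring rank of the associated binary form of `h`. -/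
theorem stmt_3 (n m : ℕ) (hn : 2 ≤ n) (hm : 1 ≤ m)
    (H : Tensor m n) (h : Fin ((n - 1) * m + 1) → ℂ) (hH : IsHankel H h) :
    vandRank H = waringRank ((n - 1) * m) h := by
  simp only [vandRank, waringRank, hH.mem_vandSet_iff_mem_waringSet (by omega)]
end
end

section
/- Let n ≥ 2, m ≥ 1, and d = (n−1)m. There exists a nonzero polynomial P in d+1 complex variables such that for every Hankel tensor H of order m and dimension n whose parameter vector h ∈ ℂ^{d+1} satisfies P(h) ≠ 0, one has rank_V(H) = ⌈((n−1)m+1)/2⌉. -/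
open scoped BigOperators
open MvPolynomial

noncomputable section

/-!
The entries of a Hankel tensor depend only on index sums, so Vandermonde decompositions of `H` are
the same as decompositions `h_s = ∑_k a_k^(d-s) b_k^s` of its parameter vector (Waring
decompositions of a binary form of degree `d`). Put `r = ⌈(d+1)/2⌉`.

Upper bound (Sylvester): if the Hankel matrix `(h_{i+j})_{i,j<r}` is nonsingular, then
`h_0, …, h_{2r-1}` satisfy a unique linear recurrence of length `r`; when `d` is even the missing
entry `h_{2r-1}` may be chosen freely. If the characteristic polynomial has `r` distinct roots
`β_k`, then `h_s = ∑_k w_k β_k^s`, and the weights `w_k` are absorbed as `d`-th powers.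

Lower bound: a decomposition with `t` terms factors the nonsingular `r × r` Hankel matrix
through a `t`-dimensional space.

Both nondegeneracy conditions are polynomial in `h`, and they hold for exponential sums with `r`
distinct nodes and nonzero weights, so they are satisfied generically.
-/

section CommRing

open Matrix

variable {R S : Type*} [CommRing R] [CommRing S]

/-- The `r × r` Hankel matrix `(g_{i+j})` of a sequence `g`. -/
def hankelMatrix (r : ℕ) (g : ℕ → R) : Matrix (Fin r) (Fin r) R :=
  Matrix.of fun i j => g (i + j)

/-- The coefficients of the linear recurrence of length `r` satisfied by `g_0, …, g_{2r-1}`, given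
by Cramer's rule and scaled by `det (hankelMatrix r g)` so as to be polynomial in `g`. -/
def recurrenceCoeff (r : ℕ) (g : ℕ → R) : Fin r → R :=
  (hankelMatrix r g).adjugate *ᵥ fun i => g (i + r)

/-- The characteristic polynomial of the recurrence of length `r` satisfied by
`g_0, …, g_{2r-1}`, scaled to have leading coefficient `det (hankelMatrix r g)`. -/
def recurrencePoly (r : ℕ) (g : ℕ → R) : Polynomial R :=
  Polynomial.C (hankelMatrix r g).det * Polynomial.X ^ r -
    ∑ j : Fin r, Polynomial.C (recurrenceCoeff r g j) * Polynomial.X ^ (j : ℕ)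

/-- The product of the Hankel determinant of `g` and the resultant of `recurrencePoly r g` with its
derivative. The degrees in the resultant are fixed to `r` and `r - 1` so that it commutes with
ring homomorphisms. -/
def hankelDiscr (r : ℕ) (g : ℕ → R) : R :=
  (hankelMatrix r g).det *
    (recurrencePoly r g).resultant (recurrencePoly r g).derivative r (r - 1)

theorem map_hankelMatrix (φ : R →+* S) (r : ℕ) (g : ℕ → R) :
    (hankelMatrix r g).map φ = hankelMatrix r (φ ∘ g) :=
  rfl

theorem map_det_hankelMatrix (φ : R →+* S) (r : ℕ) (g : ℕ → R) :
    φ (hankelMatrix r g).det = (hankelMatrix r (φ ∘ g)).det := by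
  rw [RingHom.map_det, RingHom.mapMatrix_apply, map_hankelMatrix]

theorem map_recurrenceCoeff (φ : R →+* S) (r : ℕ) (g : ℕ → R) (j : Fin r) :
    φ (recurrenceCoeff r g j) = recurrenceCoeff r (φ ∘ g) j := by
  rw [recurrenceCoeff, RingHom.map_mulVec, ← RingHom.mapMatrix_apply, RingHom.map_adjugate,
    RingHom.mapMatrix_apply, map_hankelMatrix]
  rfl

theorem map_recurrencePoly (φ : R →+* S) (r : ℕ) (g : ℕ → R) :
    (recurrencePoly r g).map φ = recurrencePoly r (φ ∘ g) := by
  simp only [recurrencePoly, Polynomial.map_sub, Polynomial.map_mul, Polynomial.map_pow,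
    Polynomial.map_C, Polynomial.map_X, Polynomial.map_sum, map_det_hankelMatrix φ,
    map_recurrenceCoeff φ]

theorem map_hankelDiscr (φ : R →+* S) (r : ℕ) (g : ℕ → R) :
    φ (hankelDiscr r g) = hankelDiscr r (φ ∘ g) := by
  rw [hankelDiscr, hankelDiscr, map_mul, map_det_hankelMatrix, ← Polynomial.resultant_map_map,
    ← Polynomial.derivative_map, map_recurrencePoly]

theorem det_hankelMatrix_mul (r : ℕ) (g : ℕ → R) (i : Fin r) :
    (hankelMatrix r g).det * g (i + r) = ∑ j, recurrenceCoeff r g j * g (i + j) := by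
  have cramer : hankelMatrix r g *ᵥ recurrenceCoeff r g =
      (hankelMatrix r g).det • fun i : Fin r => g (i + r) := by
    rw [recurrenceCoeff, mulVec_mulVec, mul_adjugate, smul_mulVec, one_mulVec]
  simpa [mulVec, dotProduct, hankelMatrix, mul_comm] using (congrFun cramer i).symm

theorem eval_recurrencePoly (r : ℕ) (g : ℕ → R) (x : R) :
    (recurrencePoly r g).eval x =
      (hankelMatrix r g).det * x ^ r - ∑ j, recurrenceCoeff r g j * x ^ (j : ℕ) := by
  simp [recurrencePoly, Polynomial.eval_finsetSum]

theorem degree_recurrencePoly {r : ℕ} {g : ℕ → R} (hg : (hankelMatrix r g).det ≠ 0) :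
    (recurrencePoly r g).degree = r := by
  have hlead := Polynomial.degree_C_mul_X_pow r hg
  rw [recurrencePoly, Polynomial.degree_sub_eq_left_of_degree_lt, hlead]
  rw [hlead]
  exact Polynomial.degree_sum_fin_lt _

theorem natDegree_recurrencePoly {r : ℕ} {g : ℕ → R} (hg : (hankelMatrix r g).det ≠ 0) :
    (recurrencePoly r g).natDegree = r :=
  Polynomial.natDegree_eq_of_degree_eq_some (degree_recurrencePoly hg)

theorem recurrencePoly_ne_zero {r : ℕ} {g : ℕ → R} (hg : (hankelMatrix r g).det ≠ 0) :
    recurrencePoly r g ≠ 0 :=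
  Polynomial.degree_ne_bot.1 (by simp [degree_recurrencePoly hg])

theorem sum_mul_eval_recurrencePoly_mul_pow {ι : Type*} [Fintype ι] (r : ℕ) (g : ℕ → R)
    (w β : ι → R) (i : ℕ) :
    ∑ k, w k * (recurrencePoly r g).eval (β k) * β k ^ i =
      (hankelMatrix r g).det * ∑ k, w k * β k ^ (i + r) -
        ∑ j, recurrenceCoeff r g j * ∑ k, w k * β k ^ (i + j) := by
  simp only [eval_recurrencePoly, mul_sub, sub_mul, Finset.sum_sub_distrib, Finset.mul_sum,
    Finset.sum_mul]
  rw [Finset.sum_comm (t := (Finset.univ : Finset (Fin r)))]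
  exact congrArg₂ (· - ·) (Finset.sum_congr rfl fun k _ => by ring)
    (Finset.sum_congr rfl fun j _ => Finset.sum_congr rfl fun k _ => by ring)

theorem hankelMatrix_eq_transpose_mul_diagonal_mul {ι : Type*} [Fintype ι] [DecidableEq ι] {r : ℕ}
    {g : ℕ → R} {w α β : ι → R}
    (hg : ∀ s ≤ 2 * r - 2, g s = ∑ k, w k * (α k ^ (2 * r - 2 - s) * β k ^ s)) :
    hankelMatrix r g = (rectVandermonde β α r)ᵀ * diagonal w * rectVandermonde β α r := by
  ext i j
  have hexp : 2 * r - 2 - (i + j : ℕ) = (i.rev : ℕ) + j.rev := by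
    simp only [Fin.val_rev]
    omega
  rw [hankelMatrix, of_apply, hg _ (by omega), hexp, mul_apply]
  refine Finset.sum_congr rfl fun k _ => ?_
  rw [mul_diagonal, transpose_apply, rectVandermonde_apply, rectVandermonde_apply]
  ring

theorem det_hankelMatrix_sum_mul_pow {r : ℕ} (w β : Fin r → R) :
    (hankelMatrix r fun s => ∑ k, w k * β k ^ s).det = (∏ k, w k) * (vandermonde β).det ^ 2 := by
  rw [hankelMatrix_eq_transpose_mul_diagonal_mul (w := w) (α := 1) (β := β) (by simp),
    ← projVandermonde, ← vandermonde_eq_projVandermonde, det_mul, det_mul, det_transpose,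
    det_diagonal]
  ring

theorem rank_hankelMatrix_le [StrongRankCondition R] {ι : Type*} [Fintype ι] {r d : ℕ}
    (hd : 2 * r ≤ d + 2) {g : ℕ → R} {a b : ι → R}
    (hg : ∀ s ≤ d, g s = ∑ k, a k ^ (d - s) * b k ^ s) :
    (hankelMatrix r g).rank ≤ Fintype.card ι := by
  classical
  rw [hankelMatrix_eq_transpose_mul_diagonal_mul (w := fun k => a k ^ (d - (2 * r - 2)))
    (α := a) (β := b)]
  · exact (rank_mul_le_right _ _).trans (rank_le_card_height _)
  · intro s hs
    rw [hg s (by omega), show d - s = d - (2 * r - 2) + (2 * r - 2 - s) by omega]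
    exact Finset.sum_congr rfl fun k _ => by ring

theorem eq_of_recurrence [IsDomain R] {r N : ℕ} {c : R} (hc : c ≠ 0) {q : Fin r → R}
    {f g : ℕ → R} (hinit : ∀ s < r, f s = g s)
    (hf : ∀ i < N, c * f (i + r) = ∑ j, q j * f (i + j))
    (hg : ∀ i < N, c * g (i + r) = ∑ j, q j * g (i + j)) :
    ∀ s < N + r, f s = g s := by
  intro s hs
  induction s using Nat.strong_induction_on with
  | _ s ih =>
    rcases lt_or_ge s r with hsr | hrs
    · exact hinit s hsr
    · obtain ⟨i, rfl⟩ := Nat.exists_eq_add_of_le' hrs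
      refine mul_left_cancel₀ hc ?_
      rw [hf i (by omega), hg i (by omega)]
      exact Finset.sum_congr rfl fun j _ => by rw [ih (i + j) (by omega) (by omega)]

end CommRing

section Field

open Matrix

variable {K : Type*} [Field K]

theorem hankelDiscr_ne_zero_iff {r : ℕ} {g : ℕ → K} :
    hankelDiscr r g ≠ 0 ↔ (hankelMatrix r g).det ≠ 0 ∧ (recurrencePoly r g).Separable := by
  rw [hankelDiscr, mul_ne_zero_iff]
  refine and_congr_right fun hdet => ?_
  set f := recurrencePoly r g
  have hdeg : f.natDegree = r := natDegree_recurrencePoly hdet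
  have hf0 : f ≠ 0 := recurrencePoly_ne_zero hdet
  -- In positive characteristic the derivative may have degree below `r - 1`; padding its degree
  -- only multiplies the resultant by a power of the leading coefficient of `f`.
  obtain ⟨k, hk⟩ : ∃ k, r - 1 = f.derivative.natDegree + k :=
    Nat.exists_eq_add_of_le (hdeg ▸ Polynomial.natDegree_derivative_le f)
  have hpad : f.resultant f.derivative r (r - 1) =
      f.leadingCoeff ^ k * f.resultant f.derivative := by
    rw [hk, Polynomial.resultant_add_right_deg _ _ _ _ _ le_rfl, Polynomial.leadingCoeff, hdeg]
  rw [hpad, mul_ne_zero_iff_left (pow_ne_zero k (Polynomial.leadingCoeff_ne_zero.2 hf0)), Ne,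
    Polynomial.resultant_eq_zero_iff, Polynomial.Separable]
  simp [hf0]

theorem exists_injective_isRoot_of_separable {f : Polynomial K} (hsplits : f.Splits)
    (hsep : f.Separable) {r : ℕ} (hr : f.natDegree = r) :
    ∃ β : Fin r → K, Function.Injective β ∧ ∀ k, f.IsRoot (β k) := by
  classical
  have hcard : f.roots.toFinset.card = r := by
    rw [Multiset.toFinset_card_of_nodup (Polynomial.nodup_roots hsep),
      ← hsplits.natDegree_eq_card_roots, hr]
  let e := (Finset.equivFinOfCardEq hcard).symm
  exact ⟨fun k => e k, Subtype.val_injective.comp e.injective,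
    fun k => Polynomial.isRoot_of_mem_roots (Multiset.mem_toFinset.1 (e k).2)⟩

theorem separable_of_injective_isRoot {f : Polynomial K} (hf : f ≠ 0) {r : ℕ}
    (hr : f.natDegree = r) {β : Fin r → K} (hβ : Function.Injective β)
    (hroot : ∀ k, f.IsRoot (β k)) : f.Separable := by
  have hroots : f.roots = (Finset.univ.map ⟨β, hβ⟩).val :=
    Polynomial.roots_eq_of_natDegree_le_card_of_ne_zero (by simpa using hroot) (by simp [hr]) hf
  have hsplits : f.Splits := Polynomial.splits_iff_card_roots.2 (by simp [hroots, hr])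
  rw [← Polynomial.nodup_roots_iff_of_splits hf hsplits, hroots]
  exact Finset.nodup _

theorem exists_sum_mul_pow_eq_of_injective {r : ℕ} {β : Fin r → K} (hβ : Function.Injective β)
    (g : ℕ → K) : ∃ w : Fin r → K, ∀ s < r, ∑ k, w k * β k ^ s = g s := by
  have hV : IsUnit (vandermonde β).det := (det_vandermonde_ne_zero_iff.2 hβ).isUnit
  let w : Fin r → K := (fun j : Fin r => g j) ᵥ* (vandermonde β)⁻¹
  have hw : w ᵥ* vandermonde β = fun j : Fin r => g j := by
    rw [vecMul_vecMul, nonsing_inv_mul _ hV, vecMul_one]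
  exact ⟨w, fun s hs => congrFun hw ⟨s, hs⟩⟩

theorem isRoot_recurrencePoly_sum_mul_pow {r : ℕ} {w β : Fin r → K} (hw : ∀ k, w k ≠ 0)
    (hβ : Function.Injective β) (k : Fin r) :
    (recurrencePoly r fun s => ∑ k, w k * β k ^ s).IsRoot (β k) := by
  set f := recurrencePoly r fun s => ∑ k, w k * β k ^ s
  have hvecMul : (fun k => w k * f.eval (β k)) ᵥ* vandermonde β = 0 := by
    ext i
    refine (sum_mul_eval_recurrencePoly_mul_pow r _ w β i).trans ?_
    exact sub_eq_zero.2 (det_hankelMatrix_mul r (fun s => ∑ k, w k * β k ^ s) i)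
  have hzero := eq_zero_of_vecMul_eq_zero (det_vandermonde_ne_zero_iff.2 hβ) hvecMul
  exact (mul_eq_zero.1 (congrFun hzero k)).resolve_left (hw k)

theorem hankelDiscr_sum_mul_pow_ne_zero {r : ℕ} {w β : Fin r → K} (hw : ∀ k, w k ≠ 0)
    (hβ : Function.Injective β) : hankelDiscr r (fun s => ∑ k, w k * β k ^ s) ≠ 0 := by
  have hdet : (hankelMatrix r fun s => ∑ k, w k * β k ^ s).det ≠ 0 := by
    rw [det_hankelMatrix_sum_mul_pow]
    exact mul_ne_zero (Finset.prod_ne_zero_iff.2 fun k _ => hw k)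
      (pow_ne_zero 2 (det_vandermonde_ne_zero_iff.2 hβ))
  exact hankelDiscr_ne_zero_iff.2 ⟨hdet, separable_of_injective_isRoot (recurrencePoly_ne_zero hdet)
    (natDegree_recurrencePoly hdet) hβ (isRoot_recurrencePoly_sum_mul_pow hw hβ)⟩

/-- Sylvester's theorem on Waring decompositions of generic binary forms, dehomogenized. -/
theorem exists_eq_sum_mul_pow [IsAlgClosed K] {r : ℕ} {g : ℕ → K} (hg : hankelDiscr r g ≠ 0) :
    ∃ w β : Fin r → K, ∀ s < 2 * r, g s = ∑ k, w k * β k ^ s := by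
  obtain ⟨hdet, hsep⟩ := hankelDiscr_ne_zero_iff.1 hg
  obtain ⟨β, hβ, hroot⟩ := exists_injective_isRoot_of_separable (IsAlgClosed.splits _) hsep
    (natDegree_recurrencePoly hdet)
  obtain ⟨w, hw⟩ := exists_sum_mul_pow_eq_of_injective hβ g
  have hrec (i : ℕ) : (hankelMatrix r g).det * ∑ k, w k * β k ^ (i + r) =
      ∑ j, recurrenceCoeff r g j * ∑ k, w k * β k ^ (i + j) := by
    rw [← sub_eq_zero, ← sum_mul_eval_recurrencePoly_mul_pow]
    exact Finset.sum_eq_zero fun k _ => by rw [(hroot k).eq_zero, mul_zero, zero_mul]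
  refine ⟨w, β, ?_⟩
  rw [two_mul]
  exact eq_of_recurrence hdet (fun s hs => (hw s hs).symm)
    (fun i hi => det_hankelMatrix_mul r g ⟨i, hi⟩) fun i _ => hrec i

theorem exists_eq_sum_pow_mul_pow [IsAlgClosed K] {r d : ℕ} (hd : d ≠ 0) (hdr : d < 2 * r)
    {g : ℕ → K} (hg : hankelDiscr r g ≠ 0) :
    ∃ ab : Fin r → K × K, ∀ s ≤ d, g s = ∑ k, (ab k).1 ^ (d - s) * (ab k).2 ^ s := by
  obtain ⟨w, β, hwβ⟩ := exists_eq_sum_mul_pow hg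
  choose a ha using fun k => IsAlgClosed.exists_pow_nat_eq (w k) (Nat.pos_of_ne_zero hd)
  refine ⟨fun k => (a k, a k * β k), fun s hs => ?_⟩
  rw [hwβ s (hs.trans_lt hdr)]
  refine Finset.sum_congr rfl fun k _ => ?_
  rw [mul_pow, ← mul_assoc, ← pow_add, Nat.sub_add_cancel hs, ha]

theorem le_card_of_det_hankelMatrix_ne_zero {ι : Type*} [Fintype ι] {r d : ℕ}
    (hd : 2 * r ≤ d + 2) {g : ℕ → K} (hdet : (hankelMatrix r g).det ≠ 0) {a b : ι → K}
    (hg : ∀ s ≤ d, g s = ∑ k, a k ^ (d - s) * b k ^ s) : r ≤ Fintype.card ι := by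
  have hrank : (hankelMatrix r g).rank = r := by
    rw [rank_of_isUnit _ ((isUnit_iff_isUnit_det _).2 hdet.isUnit), Fintype.card_fin]
  exact hrank.symm.trans_le (rank_hankelMatrix_le hd hg)

theorem exists_hankelDiscr_ne_zero [Infinite K] (r : ℕ) : ∃ p : ℕ → K, hankelDiscr r p ≠ 0 :=
  ⟨_, hankelDiscr_sum_mul_pow_ne_zero (w := 1) (fun _ => one_ne_zero)
    ((Infinite.natEmbedding K).injective.comp Fin.val_injective)⟩

-- `hankelDiscr r` involves `2r` entries, one more than `h` provides when `N = 2r - 1`; hence the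
-- extension `g`.
theorem exists_mvPolynomial_forall_exists_hankelDiscr_ne_zero [Infinite K] (r N : ℕ) :
    ∃ P : MvPolynomial (Fin N) K, P ≠ 0 ∧ ∀ h : Fin N → K, eval h P ≠ 0 →
      ∃ g : ℕ → K, (∀ s : Fin N, g s = h s) ∧ hankelDiscr r g ≠ 0 := by
  obtain ⟨p, hp⟩ := exists_hankelDiscr_ne_zero (K := K) r
  let P : MvPolynomial (Fin N) K := hankelDiscr r (Function.extend Fin.val X (C ∘ p))
  have heval (h : Fin N → K) : eval h P = hankelDiscr r (Function.extend Fin.val h p) := by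
    rw [map_hankelDiscr]
    congr 1
    ext s
    rw [Function.comp_apply, Function.apply_extend (eval h)]
    congr 1 <;> ext <;> simp
  refine ⟨P, fun hP => hp ?_, fun h hh => ⟨_, fun s => ?_, heval h ▸ hh⟩⟩
  · have hself : Function.extend Fin.val (fun s : Fin N => p s) p = p := by
      ext s
      by_cases hs : s < N
      · exact Fin.val_injective.extend_apply (fun s : Fin N => p s) p ⟨s, hs⟩
      · exact Function.extend_apply' _ _ _ fun ⟨i, hi⟩ => hs (hi ▸ i.2)
    rw [← hself, ← heval, hP, map_zero]
  · exact Fin.val_injective.extend_apply h p s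

end Field

section HankelTensor

theorem exists_sum_val_eq_s5 {n : ℕ} (hn : 1 ≤ n) {m s : ℕ} (hs : s ≤ (n - 1) * m) :
    ∃ i : Fin m → Fin n, ∑ j, (i j : ℕ) = s := by
  induction m generalizing s with
  | zero => exact ⟨Fin.elim0, by simpa [eq_comm] using hs⟩
  | succ m ih =>
    rw [Nat.mul_succ] at hs
    obtain ⟨i, hi⟩ := ih (s := s - min s (n - 1)) (by omega)
    refine ⟨Fin.cons ⟨min s (n - 1), by omega⟩ i, ?_⟩
    simp only [Fin.sum_univ_succ, Fin.cons_zero, Fin.cons_succ, hi]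
    omega

theorem prod_vand {m n : ℕ} (a b : ℂ) (i : Fin m → Fin n) :
    ∏ j, vand n a b (i j) =
      a ^ ((n - 1) * m - ∑ j, (i j : ℕ)) * b ^ (∑ j, (i j : ℕ)) := by
  have hexp : ∑ j, (n - 1 - (i j : ℕ)) = (n - 1) * m - ∑ j, (i j : ℕ) := by
    rw [Finset.sum_tsub_distrib _ fun j _ => Nat.le_sub_one_of_lt (i j).isLt]
    simp [mul_comm]
  simp only [vand, Finset.prod_mul_distrib, Finset.prod_pow_eq_pow_sum, hexp]

namespace IsHankel

variable {m n : ℕ} {H : Tensor m n} {h : Fin ((n - 1) * m + 1) → ℂ} {g : ℕ → ℂ}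

theorem mem_vandSet_iff (hn : 1 ≤ n) (hH : IsHankel H h) (hg : ∀ s : Fin _, g s = h s) {r : ℕ} :
    H ∈ vandSet m n r ↔ ∃ ab : Fin r → ℂ × ℂ, ∀ s ≤ (n - 1) * m,
      g s = ∑ k, (ab k).1 ^ ((n - 1) * m - s) * (ab k).2 ^ s := by
  have happly (i) : H i = g (∑ j, (i j : ℕ)) := (hH i).trans (hg _).symm
  refine exists_congr fun ab => ⟨fun hab s hs => ?_, fun hab i => ?_⟩
  · obtain ⟨i, rfl⟩ := exists_sum_val_eq_s5 hn hs
    simpa only [happly, prod_vand] using hab i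
  · have hi : ∑ j, (i j : ℕ) ≤ (n - 1) * m := by
      simpa [mul_comm] using
        Finset.sum_le_card_nsmul Finset.univ (fun j => (i j : ℕ)) (n - 1) fun j _ =>
          Nat.le_sub_one_of_lt (i j).isLt
    simpa only [happly, prod_vand] using hab _ hi

theorem vandRank_eq (hd : (n - 1) * m ≠ 0) (hH : IsHankel H h) (hg : ∀ s : Fin _, g s = h s)
    (hdiscr : hankelDiscr (((n - 1) * m + 1 + 1) / 2) g ≠ 0) :
    vandRank H = ((n - 1) * m + 1 + 1) / 2 := by
  have hn : 1 ≤ n := Nat.one_le_iff_ne_zero.2 fun h0 => hd (by simp [h0])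
  have hmem : H ∈ vandSet m n (((n - 1) * m + 1 + 1) / 2) :=
    (hH.mem_vandSet_iff hn hg).2 (exists_eq_sum_pow_mul_pow hd (by omega) hdiscr)
  refine le_antisymm (Nat.sInf_le hmem) (le_csInf ⟨_, hmem⟩ fun t ht => ?_)
  obtain ⟨ab, hab⟩ := (hH.mem_vandSet_iff hn hg).1 ht
  simpa using le_card_of_det_hankelMatrix_ne_zero (by omega)
    (hankelDiscr_ne_zero_iff.1 hdiscr).1 hab

end IsHankel

end HankelTensor

/-- A generic Hankel tensor of order `m` and dimension `n` has
Vandermonde rank `⌈((n-1)m+1)/2⌉`. -/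
theorem stmt_5 (n m : ℕ) (hn : 2 ≤ n) (hm : 1 ≤ m) :
    ∃ P : MvPolynomial (Fin ((n - 1) * m + 1)) ℂ, P ≠ 0 ∧
      ∀ (H : Tensor m n) (h : Fin ((n - 1) * m + 1) → ℂ), IsHankel H h →
        MvPolynomial.eval h P ≠ 0 → vandRank H = ((n - 1) * m + 1 + 1) / 2 := by
  have hd : (n - 1) * m ≠ 0 := Nat.mul_ne_zero (by omega) (by omega)
  obtain ⟨P, hP, hgeneric⟩ := exists_mvPolynomial_forall_exists_hankelDiscr_ne_zero (K := ℂ)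
    (((n - 1) * m + 1 + 1) / 2) ((n - 1) * m + 1)
  refine ⟨P, hP, fun H h hH hPh => ?_⟩
  obtain ⟨g, hg, hdiscr⟩ := hgeneric h hPh
  exact hH.vandRank_eq hd hg hdiscr
end
end
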